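/- arXiv:2102.08508 — 2 statements merged into one kernel-verified Lean document; each statement's English description precedes it below -/
import Mathlib

section
/- For all integers n ≥ 3, 2 ≤ j ≤ n−1, and d ≥ 0, one has p_{n,d}(1,j) = Σ binom(j−2, m₁)·binom(n−j−1, m₂)·( (n−3−m₁−m₂)! / Π_{(m,e)} ( (m!)^{λ(m,e)} · λ(m,e)! ) )·( Π_{(m,e)} l(m,e)^{λ(m,e)} )·U(m₁+m₂+1, d₀−1, m₁+1), where the sum is over all triples of nonnegative integers m₁, m₂, d₀ with m₁+m₂ even and d₀ ≤ (m₁+m₂+2)/2, together with all finitely supported functions λ from pairs (m,e) of nonnegative integers with m odd to the nonnegative integers, subject to the constraints m₁ + m₂ + 3 + Σ_{(m,e)} m·λ(m,e) = n and d₀ + Σ_{(m,e)} e·λ(m,e) = d. -/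
open scoped Classical

/-- The word `π₁π₂⋯πₙ` of a permutation of `[n] = {1, …, n}`. -/
def permWord (n : ℕ) (π : Equiv.Perm (Fin n)) : ℕ → ℕ :=
  fun i => if h : i < n then (π ⟨i, h⟩ : ℕ) + 1 else 0

/-- The number of descents of a permutation of `[n]`. -/
def desNum (n : ℕ) (π : Equiv.Perm (Fin n)) : ℕ :=
  ((Finset.range (n - 1)).filter (fun i => permWord n π (i + 1) < permWord n π i)).card

/-- `A(n,d,j)`: permutations of `[n]` with `d` descents and first letter `j`;
`0` unless `n ≥ 1`, `0 ≤ d ≤ n-1`, `1 ≤ j ≤ n`. -/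
noncomputable def eulerianFirst (n d j : ℤ) : ℕ :=
  if 1 ≤ n ∧ 0 ≤ d ∧ 1 ≤ j then
    Nat.card {π : Equiv.Perm (Fin n.toNat) //
      desNum n.toNat π = d.toNat ∧ permWord n.toNat π 0 = j.toNat}
  else 0

/-- `U(n,d,j) := A(n, n-d-1, j) + A(n, d-1, j)`. -/
noncomputable def Ucount (n d j : ℤ) : ℕ :=
  eulerianFirst n (n - d - 1) j + eulerianFirst n (d - 1) j

/-- Cyclic descent number: the number of points `x` with `c x < x`. -/
def cdes {n : ℕ} (c : Equiv.Perm (Fin n)) : ℕ :=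
  (Finset.univ.filter (fun x : Fin n => c x < x)).card

/-- Cyclic ascent number: the number of points `x` with `x < c x`. -/
def casc {n : ℕ} (c : Equiv.Perm (Fin n)) : ℕ :=
  (Finset.univ.filter (fun x : Fin n => x < c x)).card

/-- `M(π) = Σ_c min(cdes c, casc c)` over all cycles `c` of `π`. -/
def Mstat {n : ℕ} (π : Equiv.Perm (Fin n)) : ℕ :=
  ∑ c ∈ π.cycleFactorsFinset, min (cdes c) (casc c)

/-- `π` has the three-letter word `a b c` (with `a ≠ c`) as a cyclic factor. -/
def HasCyclicFactor (n : ℕ) (π : Equiv.Perm (Fin n)) (a b c : ℕ) : Prop :=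
  ∃ x y z : Fin n, (x : ℕ) + 1 = a ∧ (y : ℕ) + 1 = b ∧ (z : ℕ) + 1 = c ∧ π x = y ∧ π y = z

/-- `p_{n,d}(i,j)`: odd order permutations of length `n` with `M(π) = d` having
`i n j` as a cyclic factor. -/
noncomputable def oddOrderCyclicCount (n d i j : ℕ) : ℕ :=
  Nat.card {π : Equiv.Perm (Fin n) //
    (∀ m ∈ π.cycleType, Odd m) ∧ Mstat π = d ∧ HasCyclicFactor n π i n j}

/-- `l(m,e)`: the number of cyclic permutations of `[m]` (single `m`-cycles) `c`
with `min(cdes c, casc c) = e`; in particular `l(1,0) = 1`. -/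
noncomputable def cycleMinCount (m e : ℕ) : ℕ :=
  Nat.card {c : Equiv.Perm (Fin m) //
    c.IsCycleOn (Set.univ : Set (Fin m)) ∧ min (cdes c) (casc c) = e}


namespace OOC

/-- cycle data with total size `N` and total statistic `d` -/
noncomputable def lamFin (N d : ℕ) : Finset (ℕ × ℕ →₀ ℕ) :=
  ((Finset.range (N + 1) ×ˢ Finset.range (d + 1)).finsupp (fun _ => Finset.range (N + 1))).filter
    (fun lam => (∀ p ∈ lam.support, Odd p.1) ∧ (∑ p ∈ lam.support, p.1 * lam p) = N ∧
      (∑ p ∈ lam.support, p.2 * lam p) = d)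

lemma mem_lamFin {N d : ℕ} {lam : ℕ × ℕ →₀ ℕ} : lam ∈ lamFin N d ↔
    (∀ p ∈ lam.support, Odd p.1) ∧ (∑ p ∈ lam.support, p.1 * lam p) = N ∧
      (∑ p ∈ lam.support, p.2 * lam p) = d := by
  unfold lamFin
  rw [Finset.mem_filter, Finset.mem_finsupp_iff]
  constructor
  · exact fun h => h.2
  · rintro ⟨h1, h2, h3⟩
    have key : ∀ p ∈ lam.support, p.1 ≤ N ∧ p.2 ≤ d ∧ lam p ≤ N := by
      intro p hp
      have a1 : p.1 * lam p ≤ N := by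
        rw [← h2]
        exact Finset.single_le_sum (f := fun p => p.1 * lam p) (fun _ _ => Nat.zero_le _) hp
      have a2 : p.2 * lam p ≤ d := by
        rw [← h3]
        exact Finset.single_le_sum (f := fun p => p.2 * lam p) (fun _ _ => Nat.zero_le _) hp
      have a3 : 0 < lam p := Nat.pos_of_ne_zero (Finsupp.mem_support_iff.1 hp)
      have a4 : 0 < p.1 := (h1 p hp).pos
      refine ⟨?_, ?_, ?_⟩ <;> nlinarith
    refine ⟨⟨?_, ?_⟩, h1, h2, h3⟩
    · intro p hp
      have := key p hp
      simp only [Finset.mem_product, Finset.mem_range]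
      omega
    · intro p _
      by_cases hp : p ∈ lam.support
      · have := key p hp
        simp only [Finset.mem_range]; omega
      · simp [Finsupp.notMem_support_iff.1 hp]

/-- weight of cycle data -/
noncomputable def tw (lam : ℕ × ℕ →₀ ℕ) : ℚ :=
  lam.prod (fun p k => ((cycleMinCount p.1 p.2 : ℚ) / (p.1.factorial : ℚ)) ^ k / (k.factorial : ℚ))

lemma tw_add (p : ℕ × ℕ) (mu : ℕ × ℕ →₀ ℕ) :
    ((((Finsupp.single p 1 + mu : ℕ × ℕ →₀ ℕ) p : ℕ)) : ℚ) * tw (Finsupp.single p 1 + mu) =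
      (cycleMinCount p.1 p.2 : ℚ) / (p.1.factorial : ℚ) * tw mu := by
  unfold tw
  rw [← Finsupp.mul_prod_erase' (Finsupp.single p 1 + mu) p _ (by intro i; simp),
    ← Finsupp.mul_prod_erase' mu p _ (by intro i; simp)]
  have : (Finsupp.single p 1 + mu).erase p = mu.erase p := by
    ext q; by_cases h : q = p
    · subst h; simp
    · rw [Finsupp.erase_ne h, Finsupp.erase_ne h]; simp [Ne.symm h]
  rw [this]
  simp only [Finsupp.add_apply, Finsupp.single_eq_same]
  rw [add_comm 1 (mu p), Nat.factorial_succ, pow_succ]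
  have h1 : ((mu p).factorial : ℚ) ≠ 0 := by positivity
  have h2 : ((mu p : ℚ) + 1) ≠ 0 := by positivity
  have h3 : (p.1.factorial : ℚ) ≠ 0 := by positivity
  push_cast
  field_simp

noncomputable def ff (N d : ℕ) : ℚ := ∑ lam ∈ lamFin N d, tw lam

lemma sum_lin (g : ℕ × ℕ → ℕ) (p : ℕ × ℕ) (mu : ℕ × ℕ →₀ ℕ) :
    ∑ q ∈ (Finsupp.single p 1 + mu).support, g q * (Finsupp.single p 1 + mu : ℕ × ℕ →₀ ℕ) q =
      g p + ∑ q ∈ mu.support, g q * mu q := by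
  have := Finsupp.sum_add_index' (f := Finsupp.single p 1) (g := mu) (h := fun q k => g q * k)
    (by simp) (by intro a b c; ring)
  rw [Finsupp.sum_single_index (by simp)] at this
  simpa [Finsupp.sum] using this

lemma ff_zero (d : ℕ) : ff 0 d = if d = 0 then 1 else 0 := by
  have h0 : ∀ lam ∈ lamFin 0 d, lam = 0 := by
    intro lam h
    obtain ⟨h1, h2, h3⟩ := mem_lamFin.1 h
    rw [← Finsupp.support_eq_empty, Finset.eq_empty_iff_forall_notMem]
    intro p hp
    have := (Finset.sum_eq_zero_iff.1 h2) p hp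
    have a3 := Finsupp.mem_support_iff.1 hp
    have a4 : 0 < p.1 := (h1 p hp).pos
    rcases Nat.mul_eq_zero.1 this with h | h <;> omega
  unfold ff
  split_ifs with hd
  · subst hd
    have : lamFin 0 0 = {0} := by
      ext lam
      rw [Finset.mem_singleton]
      refine ⟨h0 lam, ?_⟩
      rintro rfl
      rw [mem_lamFin]; simp
    rw [this]; simp [tw]
  · apply Finset.sum_eq_zero
    intro lam h
    have := h0 lam h
    subst this
    rw [mem_lamFin] at h
    simp at h
    exact absurd h.symm hd

lemma ff_rec (N d : ℕ) : (N : ℚ) * ff N d =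
    ∑ p ∈ (Finset.range (N + 1) ×ˢ Finset.range (d + 1)).filter (fun p => Odd p.1),
      (p.1 : ℚ) * ((cycleMinCount p.1 p.2 : ℚ) / (p.1.factorial : ℚ)) *
        ff (N - p.1) (d - p.2) := by
  have e1 : (N : ℚ) * ff N d = ∑ x ∈ (lamFin N d).sigma (fun lam => lam.support),
      (x.2.1 : ℚ) * ((x.1 x.2 : ℚ) * tw x.1) := by
    rw [Finset.sum_sigma, ff, Finset.mul_sum]
    apply Finset.sum_congr rfl
    intro lam h
    obtain ⟨h1, h2, h3⟩ := mem_lamFin.1 h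
    rw [← h2]
    push_cast
    rw [Finset.sum_mul]
    apply Finset.sum_congr rfl
    intros; ring
  have e2 : ∑ p ∈ (Finset.range (N + 1) ×ˢ Finset.range (d + 1)).filter (fun p => Odd p.1),
      (p.1 : ℚ) * ((cycleMinCount p.1 p.2 : ℚ) / (p.1.factorial : ℚ)) *
        ff (N - p.1) (d - p.2) =
      ∑ x ∈ ((Finset.range (N + 1) ×ˢ Finset.range (d + 1)).filter (fun p => Odd p.1)).sigma
        (fun p => lamFin (N - p.1) (d - p.2)),
        (x.1.1 : ℚ) * ((cycleMinCount x.1.1 x.1.2 : ℚ) / (x.1.1.factorial : ℚ) * tw x.2) := by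
    rw [Finset.sum_sigma]
    apply Finset.sum_congr rfl
    intro p _
    rw [ff, Finset.mul_sum]
    apply Finset.sum_congr rfl
    intros; ring
  rw [e1, e2]
  symm
  refine Finset.sum_bij' (fun x _ => (⟨Finsupp.single x.1 1 + x.2, x.1⟩ :
      (_ : ℕ × ℕ →₀ ℕ) × (ℕ × ℕ))) (fun x _ => (⟨x.2, x.1 - Finsupp.single x.2 1⟩ :
      (_ : ℕ × ℕ) × (ℕ × ℕ →₀ ℕ))) ?_ ?_ ?_ ?_ ?_
  · rintro ⟨p, mu⟩ h
    simp only [Finset.mem_sigma, Finset.mem_filter, Finset.mem_product, Finset.mem_range,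
      mem_lamFin] at h ⊢
    obtain ⟨⟨⟨a1, a2⟩, a3⟩, b1, b2, b3⟩ := h
    refine ⟨⟨?_, ?_, ?_⟩, ?_⟩
    · intro q hq
      rw [Finsupp.mem_support_iff, Finsupp.add_apply, Finsupp.single_apply] at hq
      by_cases hqp : p = q
      · rw [← hqp]; exact a3
      · rw [if_neg hqp, zero_add] at hq
        exact b1 q (Finsupp.mem_support_iff.2 hq)
    · rw [sum_lin (fun q => q.1), b2]; omega
    · rw [sum_lin (fun q => q.2), b3]; omega
    · rw [Finsupp.mem_support_iff]; simp
  · rintro ⟨lam, p⟩ h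
    simp only [Finset.mem_sigma, Finset.mem_filter, Finset.mem_product, Finset.mem_range,
      mem_lamFin] at h ⊢
    obtain ⟨⟨a1, a2, a3⟩, b⟩ := h
    have hl : lam = Finsupp.single p 1 + (lam - Finsupp.single p 1) := by
      rw [add_tsub_cancel_of_le]
      intro q
      rw [Finsupp.single_apply]
      split_ifs with h
      · subst h; exact Nat.pos_of_ne_zero (Finsupp.mem_support_iff.1 b)
      · exact Nat.zero_le _
    rw [hl, sum_lin (fun q => q.1)] at a2
    rw [hl, sum_lin (fun q => q.2)] at a3
    refine ⟨⟨⟨by omega, by omega⟩, a1 p b⟩, ?_, by omega, by omega⟩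
    intro q hq
    apply a1 q
    rw [Finsupp.mem_support_iff] at hq ⊢
    rw [Finsupp.tsub_apply] at hq
    omega
  · rintro ⟨p, mu⟩ h
    simp
  · rintro ⟨lam, p⟩ h
    simp only [Finset.mem_sigma] at h
    have hl : Finsupp.single p 1 + (lam - Finsupp.single p 1) = lam := by
      rw [add_tsub_cancel_of_le]
      intro q
      rw [Finsupp.single_apply]
      split_ifs with h'
      · subst h'; exact Nat.pos_of_ne_zero (Finsupp.mem_support_iff.1 h.2)
      · exact Nat.zero_le _
    simp [hl]
  · rintro ⟨p, mu⟩ h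
    simp only
    rw [tw_add]

end OOC

namespace OOC

open Equiv Equiv.Perm

/-- permutations that are one cycle on `T` and fix everything else -/
noncomputable def cyc {n : ℕ} (T : Finset (Fin n)) : Finset (Perm (Fin n)) :=
  Finset.univ.filter (fun c => c.IsCycleOn (T : Set (Fin n)) ∧ c.support ⊆ T)

/-- odd order permutations supported in `S` with statistic `d` -/
noncomputable def oddOn {n : ℕ} (S : Finset (Fin n)) (d : ℕ) : Finset (Perm (Fin n)) :=
  Finset.univ.filter (fun π => π.support ⊆ S ∧ (∀ m ∈ π.cycleType, Odd m) ∧ Mstat π = d)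

lemma cyc_cases {n : ℕ} {T : Finset (Fin n)} {c : Perm (Fin n)} (hc : c ∈ cyc T) {a : Fin n}
    (ha : a ∈ T) : (T = {a} ∧ c = 1) ∨ (c.IsCycle ∧ c.support = T) := by
  simp only [cyc, Finset.mem_filter, Finset.mem_univ, true_and] at hc
  obtain ⟨h1, h2⟩ := hc
  by_cases hT : (T : Set (Fin n)).Nontrivial
  · right
    refine ⟨isCycle_iff_exists_isCycleOn.2 ⟨T, hT, h1, ?_⟩, ?_⟩
    · intro x hx
      exact h2 (mem_support.2 hx)
    · apply Finset.Subset.antisymm h2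
      intro x hx
      exact mem_support.2 (h1.apply_ne hT hx)
  · left
    have hT' : T = {a} := by
      rw [Set.not_nontrivial_iff] at hT
      ext x
      rw [Finset.mem_singleton]
      exact ⟨fun hx => hT hx ha, fun hx => hx ▸ ha⟩
    refine ⟨hT', ?_⟩
    subst hT'
    rw [← support_eq_empty_iff]
    by_contra hne
    have := one_lt_card_support_of_ne_one (fun h => hne (support_eq_empty_iff.2 h))
    have := Finset.card_le_card h2
    rw [Finset.card_singleton] at this
    omega

lemma cyc_Mstat {n : ℕ} {T : Finset (Fin n)} {c : Perm (Fin n)} (hc : c ∈ cyc T) {a : Fin n}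
    (ha : a ∈ T) : Mstat c = min (cdes c) (casc c) := by
  rcases cyc_cases hc ha with ⟨_, h⟩ | ⟨h, _⟩
  · subst h
    simp [Mstat, cdes, casc, cycleFactorsFinset_eq_empty_iff.2]
  · rw [Mstat, cycleFactorsFinset_eq_singleton_iff.2 ⟨h, rfl⟩, Finset.sum_singleton]

lemma cyc_odd {n : ℕ} {T : Finset (Fin n)} {c : Perm (Fin n)} (hc : c ∈ cyc T) {a : Fin n}
    (ha : a ∈ T) : (∀ m ∈ c.cycleType, Odd m) ↔ Odd T.card := by
  rcases cyc_cases hc ha with ⟨h', h⟩ | ⟨h, h'⟩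
  · subst h h'
    simp
  · rw [h.cycleType, h']; simp

lemma cyc_cycleOf {n : ℕ} {T : Finset (Fin n)} {c : Perm (Fin n)} (hc : c ∈ cyc T) {a : Fin n}
    (ha : a ∈ T) : c.cycleOf a = c := by
  rcases cyc_cases hc ha with ⟨h', h⟩ | ⟨h, h'⟩
  · subst h; simp
  · apply h.cycleOf_eq
    rw [← mem_support, h']; exact ha

lemma cyc_insert {n : ℕ} {T : Finset (Fin n)} {c : Perm (Fin n)} (hc : c ∈ cyc T) {a : Fin n}
    (ha : a ∈ T) : insert a c.support = T := by
  rcases cyc_cases hc ha with ⟨h', h⟩ | ⟨h, h'⟩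
  · subst h h'; simp
  · rw [h', Finset.insert_eq_self]; exact ha

lemma cycleOf_mem_cyc {n : ℕ} (π : Perm (Fin n)) (a : Fin n) :
    π.cycleOf a ∈ cyc (insert a (π.cycleOf a).support) := by
  simp only [cyc, Finset.mem_filter, Finset.mem_univ, true_and]
  refine ⟨?_, Finset.subset_insert _ _⟩
  by_cases h : π a = a
  · rw [(cycleOf_eq_one_iff π).2 h]
    simp
  · rw [Finset.insert_eq_self.2 (by rw [mem_support, cycleOf_apply_self]; exact h)]
    have := (isCycle_cycleOf π h).isCycleOn
    rwa [coe_support_eq_set_support]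

lemma disjoint_cycleOf {n : ℕ} (π : Perm (Fin n)) (a : Fin n) :
    (π * (π.cycleOf a)⁻¹).Disjoint (π.cycleOf a) ∧ a ∉ (π * (π.cycleOf a)⁻¹).support := by
  by_cases h : π a = a
  · rw [(cycleOf_eq_one_iff π).2 h]
    simp [h]
  · have h1 := disjoint_mul_inv_of_mem_cycleFactorsFinset
      (cycleOf_mem_cycleFactorsFinset_iff.2 (mem_support.2 h))
    refine ⟨h1, ?_⟩
    rw [disjoint_iff_disjoint_support, Finset.disjoint_right] at h1
    apply h1
    rw [mem_support, cycleOf_apply_self]; exact h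

lemma Mstat_mul {n : ℕ} {f g : Perm (Fin n)} (h : f.Disjoint g) :
    Mstat (f * g) = Mstat f + Mstat g := by
  unfold Mstat
  rw [h.cycleFactorsFinset_mul_eq_union, Finset.sum_union h.disjoint_cycleFactorsFinset]

lemma odd_mul {n : ℕ} {f g : Perm (Fin n)} (h : f.Disjoint g) :
    (∀ m ∈ (f * g).cycleType, Odd m) ↔
      (∀ m ∈ f.cycleType, Odd m) ∧ (∀ m ∈ g.cycleType, Odd m) := by
  rw [h.cycleType_mul]
  simp only [Multiset.mem_add]
  constructor
  · exact fun h => ⟨fun m hm => h m (Or.inl hm), fun m hm => h m (Or.inr hm)⟩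
  · rintro ⟨h1, h2⟩ m (hm | hm)
    · exact h1 m hm
    · exact h2 m hm

lemma decomp {n : ℕ} (S : Finset (Fin n)) (d : ℕ) (a : Fin n) (ha : a ∈ S)
    (R : Perm (Fin n) → Prop) :
    ((oddOn S d).filter (fun π => R (π.cycleOf a))).card =
      ∑ T ∈ S.powerset.filter (fun T => a ∈ T), if Odd T.card then
        ∑ e ∈ Finset.range (d + 1),
          ((cyc T).filter (fun c => min (cdes c) (casc c) = e ∧ R c)).card *
            (oddOn (S \ T) (d - e)).card else 0 := by
  rw [← Finset.sum_filter]
  have e1 : ∀ T, (∑ e ∈ Finset.range (d + 1),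
          ((cyc T).filter (fun c => min (cdes c) (casc c) = e ∧ R c)).card *
            (oddOn (S \ T) (d - e)).card) = ((Finset.range (d + 1)).sigma (fun e =>
          ((cyc T).filter (fun c => min (cdes c) (casc c) = e ∧ R c)) ×ˢ
            (oddOn (S \ T) (d - e)))).card := by
    intro T
    rw [Finset.card_sigma]
    simp only [Finset.card_product]
  simp only [e1]
  rw [← Finset.card_sigma]
  refine Finset.card_bij' (fun π _ => ⟨insert a (π.cycleOf a).support,
    ⟨min (cdes (π.cycleOf a)) (casc (π.cycleOf a)), (π.cycleOf a, π * (π.cycleOf a)⁻¹)⟩⟩)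
    (fun x _ => x.2.2.2 * x.2.2.1) ?_ ?_ ?_ ?_
  · intro π hπ
    simp only [oddOn, Finset.mem_filter, Finset.mem_univ, true_and, Finset.mem_sigma,
      Finset.mem_powerset, Finset.mem_product, Finset.mem_range] at hπ ⊢
    obtain ⟨⟨h1, h2, h3⟩, h4⟩ := hπ
    obtain ⟨hd, hna⟩ := disjoint_cycleOf π a
    have hm := cycleOf_mem_cyc π a
    have ham := Finset.mem_insert_self a (π.cycleOf a).support
    have hodd := cyc_odd hm ham
    have hM := cyc_Mstat hm ham
    have hπ : π * (π.cycleOf a)⁻¹ * π.cycleOf a = π := by group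
    have hodd' := odd_mul hd
    have hM' := Mstat_mul hd
    rw [hπ] at hodd' hM'
    have h5 := hodd'.1 h2
    have hsub : insert a (π.cycleOf a).support ⊆ S := by
      apply Finset.insert_subset ha
      exact (support_cycleOf_le π a).trans h1
    refine ⟨⟨⟨hsub, ham⟩, hodd.1 h5.2⟩, ?_, ⟨hm, h4⟩, ?_, h5.1, ?_⟩
    · omega
    · intro x hx
      rw [Finset.mem_sdiff]
      constructor
      · have := support_mul_le _ _ hx
        rw [support_inv] at this
        rcases Finset.mem_union.1 this with h | h
        · exact h1 h
        · exact hsub (Finset.mem_insert_of_mem h)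
      · rw [Finset.mem_insert]
        rintro (h | h)
        · subst h; exact hna hx
        · exact Finset.disjoint_left.1 hd.disjoint_support hx h
    · omega
  · rintro ⟨T, e, c, τ⟩ hx
    simp only [oddOn, Finset.mem_filter, Finset.mem_univ, true_and, Finset.mem_sigma,
      Finset.mem_powerset, Finset.mem_product, Finset.mem_range] at hx ⊢
    obtain ⟨⟨⟨h1, h2⟩, h3⟩, h4, ⟨h5, h6, h7⟩, h8, h9, h10⟩ := hx
    have hcT := (Finset.mem_filter.1 h5).2.2
    have hd : τ.Disjoint c := by
      rw [disjoint_iff_disjoint_support, Finset.disjoint_left]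
      intro x hx hx'
      exact (Finset.mem_sdiff.1 (h8 hx)).2 (hcT hx')
    have hτa : τ a = a := by
      by_contra h
      exact (Finset.mem_sdiff.1 (h8 (mem_support.2 h))).2 h2
    have hcy : (τ * c).cycleOf a = c := by
      rw [hd.commute.eq, cycleOf_mul_of_apply_right_eq_self hd.symm.commute _ hτa,
        cyc_cycleOf h5 h2]
    rw [hcy]
    refine ⟨⟨?_, ?_, ?_⟩, h7⟩
    · intro x hx
      rcases Finset.mem_union.1 (support_mul_le _ _ hx) with h | h
      · exact (Finset.mem_sdiff.1 (h8 h)).1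
      · exact h1 (hcT h)
    · rw [odd_mul hd]
      exact ⟨h9, (cyc_odd h5 h2).2 h3⟩
    · rw [Mstat_mul hd, cyc_Mstat h5 h2, h6]; omega
  · intro π _
    simp
  · rintro ⟨T, e, c, τ⟩ hx
    simp only [oddOn, Finset.mem_filter, Finset.mem_univ, true_and, Finset.mem_sigma,
      Finset.mem_powerset, Finset.mem_product, Finset.mem_range] at hx
    obtain ⟨⟨⟨h1, h2⟩, h3⟩, h4, ⟨h5, h6, h7⟩, h8, h9, h10⟩ := hx
    have hcT := (Finset.mem_filter.1 h5).2.2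
    have hd : τ.Disjoint c := by
      rw [disjoint_iff_disjoint_support, Finset.disjoint_left]
      intro x hx hx'
      exact (Finset.mem_sdiff.1 (h8 hx)).2 (hcT hx')
    have hτa : τ a = a := by
      by_contra h
      exact (Finset.mem_sdiff.1 (h8 (mem_support.2 h))).2 h2
    have hcy : (τ * c).cycleOf a = c := by
      rw [hd.commute.eq, cycleOf_mul_of_apply_right_eq_self hd.symm.commute _ hτa,
        cyc_cycleOf h5 h2]
    have hins := cyc_insert h5 h2
    simp only [hcy, hins, h6, mul_inv_cancel_right]

end OOC

namespace OOC

open Equiv Equiv.Perm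

lemma via_zpow {m n : ℕ} (σ : Perm (Fin m)) (w : Fin m ↪ Fin n) (k : ℤ) (x : Fin m) :
    ((σ.viaEmbedding w) ^ k) (w x) = w ((σ ^ k) x) := by
  rw [← viaEmbeddingHom_apply, ← map_zpow, viaEmbeddingHom_apply, viaEmbedding_apply]

lemma via_pow {m n : ℕ} (σ : Perm (Fin m)) (w : Fin m ↪ Fin n) (k : ℕ) (x : Fin m) :
    ((σ.viaEmbedding w) ^ k) (w x) = w ((σ ^ k) x) := by
  simpa using via_zpow σ w k x

lemma via_mem_cyc {m n : ℕ} (σ : Perm (Fin m)) (w : Fin m ↪ Fin n) (T : Finset (Fin n))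
    (hT : Set.range w = (T : Set (Fin n))) :
    σ.viaEmbedding w ∈ cyc T ↔ σ.IsCycleOn Set.univ := by
  simp only [cyc, Finset.mem_filter, Finset.mem_univ, true_and]
  have hsupp : (σ.viaEmbedding w).support ⊆ T := by
    intro x hx
    by_contra h
    apply mem_support.1 hx
    apply viaEmbedding_apply_of_notMem
    rw [hT]; exact h
  constructor
  · rintro ⟨h1, _⟩
    refine ⟨by simp, ?_⟩
    intro x _ y _
    obtain ⟨k, hk⟩ := h1.2 (show w x ∈ (T : Set _) by rw [← hT]; simp)
      (show w y ∈ (T : Set _) by rw [← hT]; simp)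
    rw [via_zpow] at hk
    exact ⟨k, w.injective hk⟩
  · intro h
    refine ⟨⟨?_, ?_⟩, hsupp⟩
    · refine ⟨?_, (σ.viaEmbedding w).injective.injOn, ?_⟩
      · rw [← hT]
        rintro _ ⟨x, rfl⟩
        rw [viaEmbedding_apply]; simp
      · rw [← hT]
        rintro _ ⟨x, rfl⟩
        refine ⟨w (σ.symm x), by simp, ?_⟩
        rw [viaEmbedding_apply]; simp
    · rw [← hT]
      rintro _ ⟨x, rfl⟩ _ ⟨y, rfl⟩
      obtain ⟨k, hk⟩ := h.2 (Set.mem_univ x) (Set.mem_univ y)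
      refine ⟨k, ?_⟩
      rw [via_zpow, hk]

lemma exists_via {m n : ℕ} (c : Perm (Fin n)) (w : Fin m ↪ Fin n) (T : Finset (Fin n))
    (hT : Set.range w = (T : Set (Fin n))) (hc : c ∈ cyc T) :
    ∃ σ : Perm (Fin m), σ.viaEmbedding w = c := by
  simp only [cyc, Finset.mem_filter, Finset.mem_univ, true_and] at hc
  have hm : ∀ x, ∃ y, w y = c (w x) := by
    intro x
    have : c (w x) ∈ (T : Set _) := hc.1.1.mapsTo (by rw [← hT]; simp)
    rw [← hT] at this
    exact this
  choose f hf using hm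
  have hinj : Function.Injective f := by
    intro x y hxy
    have : c (w x) = c (w y) := by rw [← hf, ← hf, hxy]
    exact w.injective (c.injective this)
  refine ⟨Equiv.ofBijective f (Finite.injective_iff_bijective.1 hinj), ?_⟩
  ext x : 1
  by_cases hx : x ∈ Set.range w
  · obtain ⟨y, rfl⟩ := hx
    rw [viaEmbedding_apply]
    exact hf y
  · rw [viaEmbedding_apply_of_notMem _ _ _ hx]
    by_contra h
    apply hx
    rw [hT]
    exact hc.2 (mem_support.2 (Ne.symm h))

lemma via_cdes {m n : ℕ} (σ : Perm (Fin m)) (w : Fin m ↪ Fin n) :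
    cdes (σ.viaEmbedding w) = (Finset.univ.filter (fun i => w (σ i) < w i)).card := by
  symm
  unfold cdes
  apply Finset.card_bij (fun i _ => w i)
  · intro i hi
    simpa [viaEmbedding_apply] using hi
  · intro i _ j _ h
    exact w.injective h
  · intro x hx
    simp only [Finset.mem_filter, Finset.mem_univ, true_and] at hx
    by_cases h : x ∈ Set.range w
    · obtain ⟨y, rfl⟩ := h
      rw [viaEmbedding_apply] at hx
      exact ⟨y, by simpa using hx, rfl⟩
    · rw [viaEmbedding_apply_of_notMem _ _ _ h] at hx
      exact absurd hx (lt_irrefl _)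

lemma via_casc {m n : ℕ} (σ : Perm (Fin m)) (w : Fin m ↪ Fin n) :
    casc (σ.viaEmbedding w) = (Finset.univ.filter (fun i => w i < w (σ i))).card := by
  symm
  unfold casc
  apply Finset.card_bij (fun i _ => w i)
  · intro i hi
    simpa [viaEmbedding_apply] using hi
  · intro i _ j _ h
    exact w.injective h
  · intro x hx
    simp only [Finset.mem_filter, Finset.mem_univ, true_and] at hx
    by_cases h : x ∈ Set.range w
    · obtain ⟨y, rfl⟩ := h
      rw [viaEmbedding_apply] at hx
      exact ⟨y, by simpa using hx, rfl⟩
    · rw [viaEmbedding_apply_of_notMem _ _ _ h] at hx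
      exact absurd hx (lt_irrefl _)

lemma card_cyc {n : ℕ} (T : Finset (Fin n)) (e : ℕ) :
    ((cyc T).filter (fun c => min (cdes c) (casc c) = e)).card = cycleMinCount T.card e := by
  unfold cycleMinCount
  rw [Nat.card_eq_fintype_card, Fintype.card_subtype]
  symm
  set w : Fin T.card ↪ Fin n := (T.orderEmbOfFin rfl).toEmbedding with hw
  have hT : Set.range w = (T : Set (Fin n)) := Finset.range_orderEmbOfFin T rfl
  have hlt : ∀ x y, w x < w y ↔ x < y := fun x y => (T.orderEmbOfFin rfl).lt_iff_lt
  have hcd : ∀ σ : Perm (Fin T.card), cdes (σ.viaEmbedding w) = cdes σ := by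
    intro σ; rw [via_cdes]; simp only [hlt, cdes]
  have hca : ∀ σ : Perm (Fin T.card), casc (σ.viaEmbedding w) = casc σ := by
    intro σ; rw [via_casc]; simp only [hlt, casc]
  apply Finset.card_bij (fun σ _ => σ.viaEmbedding w)
  · intro σ hσ
    rw [Finset.mem_filter] at hσ ⊢
    rw [hcd, hca, via_mem_cyc σ w T hT]
    exact hσ.2
  · intro σ _ τ _ h
    exact viaEmbeddingHom_injective w h
  · intro c hc
    rw [Finset.mem_filter] at hc
    obtain ⟨σ, rfl⟩ := exists_via c w T hT hc.1
    refine ⟨σ, ?_, rfl⟩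
    rw [hcd, hca, via_mem_cyc σ w T hT] at hc
    rw [Finset.mem_filter]
    exact ⟨Finset.mem_univ _, hc⟩

lemma sum_subsetsQ {n : ℕ} (S : Finset (Fin n)) (a : Fin n) (ha : a ∈ S) (g : ℕ → ℚ) :
    ∑ T ∈ S.powerset.filter (fun T => a ∈ T), g T.card =
      ∑ k ∈ Finset.range S.card, ((S.card - 1).choose k : ℚ) * g (k + 1) := by
  have e := Finset.sum_powerset_apply_card (fun k => g (k + 1)) (x := S.erase a)
  rw [Finset.card_erase_of_mem ha] at e
  have hpos : 0 < S.card := Finset.card_pos.2 ⟨a, ha⟩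
  rw [Nat.sub_add_cancel hpos] at e
  simp only [nsmul_eq_mul] at e
  rw [← e]
  symm
  refine Finset.sum_bij' (fun T _ => insert a T) (fun T _ => T.erase a) ?_ ?_ ?_ ?_ ?_
  · intro T hT
    rw [Finset.mem_powerset] at hT
    simp only [Finset.mem_filter, Finset.mem_powerset, Finset.mem_insert_self, and_true]
    exact Finset.insert_subset ha (hT.trans (Finset.erase_subset _ _))
  · intro T hT
    simp only [Finset.mem_filter, Finset.mem_powerset] at hT
    rw [Finset.mem_powerset]
    exact Finset.erase_subset_erase _ hT.1
  · intro T hT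
    rw [Finset.mem_powerset] at hT
    exact Finset.erase_insert (fun h => by simpa using hT h)
  · intro T hT
    simp only [Finset.mem_filter, Finset.mem_powerset] at hT
    exact Finset.insert_erase hT.2
  · intro T hT
    rw [Finset.mem_powerset] at hT
    rw [Finset.card_insert_of_notMem (fun h => by simpa using hT h)]

lemma card_oddOn {n : ℕ} : ∀ (N : ℕ) (S : Finset (Fin n)) (d : ℕ), S.card = N →
    ((oddOn S d).card : ℚ) = (N.factorial : ℚ) * ff N d := by
  intro N
  induction N using Nat.strong_induction_on with
  | _ N ih =>
  intro S d hS
  rcases Nat.eq_zero_or_pos N with h0 | hpos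
  · subst h0
    rw [Finset.card_eq_zero] at hS
    subst hS
    rw [ff_zero]
    have : (oddOn (∅ : Finset (Fin n)) d) = if d = 0 then {1} else ∅ := by
      ext π
      simp only [oddOn, Finset.mem_filter, Finset.mem_univ, true_and, Finset.subset_empty,
        support_eq_empty_iff]
      split_ifs with hd
      · rw [Finset.mem_singleton]
        refine ⟨fun h => h.1, ?_⟩
        rintro rfl
        simp [Mstat, hd, cycleFactorsFinset_eq_empty_iff.2]
      · simp only [Finset.notMem_empty, iff_false]
        rintro ⟨rfl, _, h⟩
        apply hd
        rw [← h]
        simp [Mstat, cycleFactorsFinset_eq_empty_iff.2]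
    rw [this]
    split_ifs <;> simp
  · obtain ⟨a, ha⟩ : S.Nonempty := Finset.card_pos.1 (by omega)
    have hdec := decomp S d a ha (fun _ => True)
    simp only [Finset.filter_true, and_true, card_cyc] at hdec
    rw [hdec]
    push_cast
    obtain ⟨G, hG⟩ : ∃ G : ℕ → ℚ, G = (fun k => if Odd k then ∑ e ∈ Finset.range (d + 1),
          (cycleMinCount k e : ℚ) * (((N - k).factorial : ℚ) * ff (N - k) (d - e)) else 0) :=
      ⟨_, rfl⟩
    have e1 : ∀ T ∈ S.powerset.filter (fun T => a ∈ T),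
        ((if Odd T.card then ∑ e ∈ Finset.range (d + 1),
          (cycleMinCount T.card e : ℚ) * ((oddOn (S \ T) (d - e)).card : ℚ) else 0)) =
        G T.card := by
      intro T hT
      simp only [Finset.mem_filter, Finset.mem_powerset] at hT
      have hcp : 0 < T.card := Finset.card_pos.2 ⟨a, hT.2⟩
      have hc : (S \ T).card = N - T.card := by rw [Finset.card_sdiff_of_subset hT.1, hS]
      rw [hG]
      simp only
      split_ifs
      · apply Finset.sum_congr rfl
        intro e _
        rw [ih (N - T.card) (by omega) (S \ T) (d - e) hc]
      · rfl
    rw [Finset.sum_congr rfl e1, sum_subsetsQ S a ha G, hS]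
    subst hG
    have hN : (N : ℚ) ≠ 0 := by positivity
    apply mul_left_cancel₀ hN
    rw [mul_left_comm, ff_rec, Finset.sum_filter, Finset.sum_product, Finset.sum_range_succ',
      Finset.mul_sum, mul_add, Finset.mul_sum]
    simp only [Nat.not_odd_zero, if_false, Finset.sum_const_zero, mul_zero, add_zero]
    apply Finset.sum_congr rfl
    intro k hk
    rw [Finset.mem_range] at hk
    split_ifs
    · simp only [Finset.mul_sum]
      apply Finset.sum_congr rfl
      intro e _
      have hch := Nat.choose_mul_factorial_mul_factorial (n := N - 1) (k := k) (by omega)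
      have h1 : N.factorial = N * (N - 1).factorial := (Nat.mul_factorial_pred (by omega)).symm
      have h2 : N - 1 - k = N - (k + 1) := by omega
      rw [h1, ← hch, h2, Nat.factorial_succ]
      have h3 : ((k + 1 : ℕ) : ℚ) ≠ 0 := by positivity
      have h4 : (k.factorial : ℚ) ≠ 0 := by positivity
      push_cast at h3 ⊢
      field_simp
    · simp

end OOC

namespace OOC

open Equiv Equiv.Perm

lemma eulerian_nat (N k j : ℕ) (hN : 1 ≤ N) (hj : 1 ≤ j) :
    eulerianFirst (N : ℤ) (k : ℤ) (j : ℤ) =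
      (Finset.univ.filter (fun π : Perm (Fin N) => desNum N π = k ∧ permWord N π 0 = j)).card := by
  unfold eulerianFirst
  rw [if_pos ⟨by omega, by omega, by omega⟩]
  change Nat.card {π : Perm (Fin N) // desNum N π = k ∧ permWord N π 0 = j} = _
  rw [Nat.card_eq_fintype_card, Fintype.card_subtype]

lemma des_sum (M : ℕ) (σ : Perm (Fin (M + 1))) :
    desNum (M + 1) σ = ∑ i : Fin M, if σ i.succ < σ i.castSucc then 1 else 0 := by
  unfold desNum
  rw [Finset.card_filter]
  simp only [Nat.add_sub_cancel]
  rw [Finset.sum_range]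
  apply Finset.sum_congr rfl
  intro i _
  have h1 : permWord (M + 1) σ (i + 1) = (σ i.succ : ℕ) + 1 := by
    unfold permWord
    rw [dif_pos (by omega)]; rfl
  have h2 : permWord (M + 1) σ i = (σ i.castSucc : ℕ) + 1 := by
    unfold permWord
    rw [dif_pos (by omega)]; rfl
  rw [h1, h2]
  simp only [Nat.add_lt_add_iff_right, Fin.lt_def]

/-- the word of the cycle -/
def wfun {n M : ℕ} (z l : Fin n) (emb : Fin (M + 1) ↪o Fin n) (σ : Perm (Fin (M + 1))) :
    Fin (M + 3) → Fin n :=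
  Fin.cons z (Fin.cons l (fun i => emb (σ i)) : Fin (M + 2) → Fin n)

lemma wfun_zero {n M : ℕ} (z l : Fin n) (emb : Fin (M + 1) ↪o Fin n) (σ : Perm (Fin (M + 1))) :
    wfun z l emb σ 0 = z := rfl

lemma wfun_one {n M : ℕ} (z l : Fin n) (emb : Fin (M + 1) ↪o Fin n) (σ : Perm (Fin (M + 1))) :
    wfun z l emb σ (Fin.succ 0) = l := rfl

lemma wfun_ss {n M : ℕ} (z l : Fin n) (emb : Fin (M + 1) ↪o Fin n) (σ : Perm (Fin (M + 1)))
    (i : Fin (M + 1)) : wfun z l emb σ i.succ.succ = emb (σ i) := rfl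

lemma wfun_inj {n M : ℕ} {z l : Fin n} {emb : Fin (M + 1) ↪o Fin n}
    (h : ∀ i, z < emb i ∧ emb i < l) (σ : Perm (Fin (M + 1))) :
    Function.Injective (wfun z l emb σ) := by
  unfold wfun
  rw [Fin.cons_injective_iff, Fin.cons_injective_iff]
  refine ⟨?_, ?_, ?_⟩
  · rintro ⟨i, hi⟩
    have h0 := h 0
    revert hi
    refine Fin.cases ?_ (fun i => ?_) i
    · intro hi
      rw [Fin.cons_zero] at hi
      exact absurd hi.symm (h0.1.trans h0.2).ne
    · intro hi
      rw [Fin.cons_succ] at hi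
      exact absurd hi.symm (h _).1.ne
  · rintro ⟨i, hi⟩
    exact absurd hi (h _).2.ne
  · intro i j hij
    exact σ.injective (emb.injective hij)

/-- the cycle attached to a word -/
noncomputable def cfun {n M : ℕ} {z l : Fin n} {emb : Fin (M + 1) ↪o Fin n}
    (h : ∀ i, z < emb i ∧ emb i < l) (σ : Perm (Fin (M + 1))) : Perm (Fin n) :=
  (finRotate (M + 3)).viaEmbedding ⟨wfun z l emb σ, wfun_inj h σ⟩

lemma cfun_castSucc {n M : ℕ} {z l : Fin n} {emb : Fin (M + 1) ↪o Fin n}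
    (h : ∀ i, z < emb i ∧ emb i < l) (σ : Perm (Fin (M + 1))) (i : Fin (M + 2)) :
    cfun h σ (wfun z l emb σ i.castSucc) = wfun z l emb σ i.succ := by
  have := viaEmbedding_apply (finRotate (M + 3)) ⟨wfun z l emb σ, wfun_inj h σ⟩ i.castSucc
  rw [finRotate_apply, Fin.coeSucc_eq_succ] at this
  exact this

lemma cfun_last {n M : ℕ} {z l : Fin n} {emb : Fin (M + 1) ↪o Fin n}
    (h : ∀ i, z < emb i ∧ emb i < l) (σ : Perm (Fin (M + 1))) :
    cfun h σ (wfun z l emb σ (Fin.last _)) = z := by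
  have := viaEmbedding_apply (finRotate (M + 3)) ⟨wfun z l emb σ, wfun_inj h σ⟩ (Fin.last _)
  rw [finRotate_last] at this
  exact this

lemma wfun_range {n M : ℕ} {z l : Fin n} {emb : Fin (M + 1) ↪o Fin n}
    (B : Finset (Fin n)) (hB : Set.range emb = (B : Set (Fin n))) (σ : Perm (Fin (M + 1))) :
    Set.range (wfun z l emb σ) = ((insert z (insert l B) : Finset (Fin n)) : Set (Fin n)) := by
  unfold wfun
  rw [Fin.range_cons, Fin.range_cons]
  have : Set.range (fun i => emb (σ i)) = Set.range emb := by
    ext x; constructor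
    · rintro ⟨i, rfl⟩; simp
    · rintro ⟨i, rfl⟩; exact ⟨σ.symm i, by simp⟩
  rw [this, hB]
  simp

lemma cfun_mem_cyc {n M : ℕ} {z l : Fin n} {emb : Fin (M + 1) ↪o Fin n}
    (h : ∀ i, z < emb i ∧ emb i < l)
    (B : Finset (Fin n)) (hB : Set.range emb = (B : Set (Fin n))) (σ : Perm (Fin (M + 1))) :
    cfun h σ ∈ cyc (insert z (insert l B)) := by
  unfold cfun
  rw [via_mem_cyc]
  · have := (isCycle_finRotate (n := M + 1)).isCycleOn
    convert this using 1
    ext x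
    simp
  · exact wfun_range B hB σ

lemma cfun_cdes {n M : ℕ} {z l : Fin n} {emb : Fin (M + 1) ↪o Fin n}
    (h : ∀ i, z < emb i ∧ emb i < l) (σ : Perm (Fin (M + 1))) :
    cdes (cfun h σ) = desNum (M + 1) σ + 2 := by
  unfold cfun
  rw [via_cdes, Finset.card_filter, Fin.sum_univ_castSucc, Fin.sum_univ_succ, Fin.sum_univ_succ]
  simp only [Fin.last_add_one, finRotate_apply, Fin.coeSucc_eq_succ, Function.Embedding.coeFn_mk]
  have h0 := h 0
  have e1 : ¬ (wfun z l emb σ (Fin.succ 0) < wfun z l emb σ (Fin.castSucc 0)) := by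
    rw [wfun_one, Fin.castSucc_zero, wfun_zero]
    exact (h0.1.trans h0.2).asymm
  have e2 : (wfun z l emb σ (Fin.succ (Fin.succ 0)) < wfun z l emb σ (Fin.castSucc (Fin.succ 0))) := by
    rw [wfun_ss, Fin.castSucc_succ, Fin.castSucc_zero, wfun_one]
    exact (h _).2
  have e3 : wfun z l emb σ 0 < wfun z l emb σ (Fin.last _) := by
    rw [← Fin.succ_last, ← Fin.succ_last, wfun_ss, wfun_zero]
    exact (h _).1
  rw [if_neg e1, if_pos e2, if_pos e3, des_sum]
  simp only [Fin.castSucc_succ, wfun_ss, emb.lt_iff_lt]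
  omega

lemma cdes_add_casc {n : ℕ} (c : Perm (Fin n)) : cdes c + casc c = c.support.card := by
  unfold cdes casc
  rw [← Finset.card_union_of_disjoint]
  · congr 1
    ext x
    simp only [Finset.mem_union, Finset.mem_filter, Finset.mem_univ, true_and, mem_support]
    exact lt_or_lt_iff_ne
  · rw [Finset.disjoint_left]
    intro x hx hx'
    simp only [Finset.mem_filter, Finset.mem_univ, true_and] at hx hx'
    exact hx.asymm hx'

lemma cfun_inj {n M : ℕ} {z l : Fin n} {emb : Fin (M + 1) ↪o Fin n}
    (h : ∀ i, z < emb i ∧ emb i < l) : Function.Injective (cfun h) := by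
  intro σ τ hst
  have key : ∀ i, wfun z l emb σ i = wfun z l emb τ i := by
    intro i
    induction i using Fin.induction with
    | zero => rfl
    | succ i ih => rw [← cfun_castSucc h σ i, ← cfun_castSucc h τ i, hst, ih]
  ext i : 1
  have := key i.succ.succ
  rw [wfun_ss, wfun_ss] at this
  exact emb.injective this

lemma cfun_surj {n M : ℕ} {z l : Fin n} {emb : Fin (M + 1) ↪o Fin n}
    (h : ∀ i, z < emb i ∧ emb i < l)
    (B : Finset (Fin n)) (hB : Set.range emb = (B : Set (Fin n)))
    (c : Perm (Fin n)) (hc : c ∈ cyc (insert z (insert l B))) (hz : c z = l) :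
    ∃ σ, cfun h σ = c := by
  have hBb : ∀ x ∈ B, z < x ∧ x < l := by
    intro x hx
    have : x ∈ Set.range emb := by rw [hB]; exact hx
    obtain ⟨i, rfl⟩ := this
    exact h i
  have hzl : z < l := (h 0).1.trans (h 0).2
  have hcB : B.card = M + 1 := by
    have : Finset.univ.map emb.toEmbedding = B := by
      apply Finset.coe_injective
      rw [← hB]; simp
    rw [← this]; simp
  obtain ⟨T, hTdef⟩ : ∃ T, T = insert z (insert l B) := ⟨_, rfl⟩
  have hlB : l ∉ B := fun hx => (hBb l hx).2.false
  have hzB : z ∉ insert l B := by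
    rw [Finset.mem_insert, not_or]
    exact ⟨hzl.ne, fun hx => (hBb z hx).1.false⟩
  have hTc : T.card = M + 3 := by
    rw [hTdef, Finset.card_insert_of_notMem hzB, Finset.card_insert_of_notMem hlB, hcB]
  rw [← hTdef] at hc
  have hzT : z ∈ T := by rw [hTdef]; simp
  have hc' := hc
  simp only [cyc, Finset.mem_filter, Finset.mem_univ, true_and] at hc'
  obtain ⟨hcy, hsup⟩ := hc'
  have hpow : ∀ k : ℕ, (c ^ k) z ∈ T := by
    intro k
    induction k with
    | zero => simpa using hzT
    | succ k ih =>
      rw [pow_succ', mul_apply]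
      exact hcy.1.mapsTo ih
  have hinj : ∀ a b : ℕ, a < M + 3 → b < M + 3 → (c ^ a) z = (c ^ b) z → a = b := by
    intro a b ha hb hab
    have := (hcy.pow_apply_eq_pow_apply hzT).1 hab
    rw [hTc] at this
    rw [Nat.ModEq, Nat.mod_eq_of_lt ha, Nat.mod_eq_of_lt hb] at this
    exact this
  have hf : ∀ i : Fin (M + 1), ∃ k, emb k = (c ^ ((i : ℕ) + 2)) z := by
    intro i
    have h1 := hpow ((i : ℕ) + 2)
    have hi := i.2
    rw [hTdef, Finset.mem_insert, Finset.mem_insert] at h1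
    rcases h1 with h1 | h1 | h1
    · have := hinj (i + 2) 0 (by omega) (by omega) (by simpa using h1)
      omega
    · have := hinj (i + 2) 1 (by omega) (by omega) (by rw [h1, pow_one, hz])
      omega
    · have : (c ^ ((i : ℕ) + 2)) z ∈ Set.range emb := by rw [hB]; exact h1
      exact this
  choose f hf using hf
  have hfi : Function.Injective f := by
    intro a b hab
    have : (c ^ ((a : ℕ) + 2)) z = (c ^ ((b : ℕ) + 2)) z := by rw [← hf, ← hf, hab]
    have := hinj _ _ (by omega) (by omega) this
    exact Fin.ext (by omega)
  obtain ⟨σ, hσ⟩ : ∃ σ : Perm (Fin (M + 1)), ∀ i, σ i = f i :=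
    ⟨Equiv.ofBijective f (Finite.injective_iff_bijective.1 hfi), fun i => rfl⟩
  refine ⟨σ, ?_⟩
  have hw : ∀ i : Fin (M + 3), wfun z l emb σ i = (c ^ (i : ℕ)) z := by
    intro i
    refine Fin.cases ?_ (fun i => Fin.cases ?_ (fun i => ?_) i) i
    · simp [wfun_zero]
    · rw [wfun_one]; simp [hz]
    · rw [wfun_ss, hσ, hf]; rfl
  have hmem := cfun_mem_cyc h B hB σ
  rw [← hTdef] at hmem
  ext x : 1
  by_cases hx : x ∈ T
  · have : x ∈ Set.range (wfun z l emb σ) := by rw [wfun_range B hB, ← hTdef]; exact hx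
    obtain ⟨i, rfl⟩ := this
    refine Fin.lastCases ?_ (fun i => ?_) i
    · rw [cfun_last, hw, ← mul_apply, ← pow_succ']
      have := hcy.pow_card_apply hzT
      rw [hTc] at this
      exact this.symm
    · rw [cfun_castSucc, hw, hw, ← mul_apply, ← pow_succ']
      rfl
  · have h1 : cfun h σ x = x := by
      by_contra hne
      exact hx ((Finset.mem_filter.1 hmem).2.2 (mem_support.2 hne))
    have h2 : c x = x := by
      by_contra hne
      exact hx (hsup (mem_support.2 hne))
    rw [h1, h2]

lemma rank_emb {n M : ℕ} (emb : Fin (M + 1) ↪o Fin n)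
    (B : Finset (Fin n)) (hB : Set.range emb = (B : Set (Fin n))) (i : Fin (M + 1)) :
    (B.filter (fun x => x < emb i)).card = i := by
  have : B.filter (fun x => x < emb i) = (Finset.Iio i).map emb.toEmbedding := by
    ext x
    simp only [Finset.mem_filter, Finset.mem_map, Finset.mem_Iio]
    rw [← Finset.mem_coe, ← hB]
    constructor
    · rintro ⟨⟨k, rfl⟩, hk⟩
      exact ⟨k, emb.lt_iff_lt.1 hk, rfl⟩
    · rintro ⟨k, hk, rfl⟩
      exact ⟨⟨k, rfl⟩, emb.lt_iff_lt.2 hk⟩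
  rw [this, Finset.card_map, Fin.card_Iio]

lemma card_cdes {n M m₁ : ℕ} (z l J : Fin n) (B : Finset (Fin n)) (hBc : B.card = M + 1)
    (hBb : ∀ x ∈ B, z < x ∧ x < l) (hJ : J ∈ B) (hm : (B.filter (fun x => x < J)).card = m₁)
    (k : ℕ) :
    ((cyc (insert z (insert l B))).filter (fun c => cdes c = k ∧ c z = l ∧ c l = J)).card =
      eulerianFirst ((M : ℤ) + 1) ((k : ℤ) - 2) ((m₁ : ℤ) + 1) := by
  obtain ⟨emb, hB⟩ : ∃ emb : Fin (M + 1) ↪o Fin n, Set.range emb = (B : Set (Fin n)) :=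
    ⟨B.orderEmbOfFin hBc, Finset.range_orderEmbOfFin B hBc⟩
  have h : ∀ i, z < emb i ∧ emb i < l := by
    intro i
    apply hBb
    rw [← Finset.mem_coe, ← hB]; simp
  by_cases hk : k < 2
  · have : ((cyc (insert z (insert l B))).filter
        (fun c => cdes c = k ∧ c z = l ∧ c l = J)) = ∅ := by
      rw [Finset.eq_empty_iff_forall_notMem]
      intro c hc
      rw [Finset.mem_filter] at hc
      obtain ⟨hc1, hc2, hc3, hc4⟩ := hc
      obtain ⟨σ, rfl⟩ := cfun_surj h B hB c hc1 hc3
      rw [cfun_cdes] at hc2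
      omega
    rw [this, eulerianFirst, if_neg (by omega), Finset.card_empty]
  · have e1 : ((M : ℤ) + 1) = ((M + 1 : ℕ) : ℤ) := by push_cast; rfl
    have e2 : ((k : ℤ) - 2) = ((k - 2 : ℕ) : ℤ) := by omega
    have e3 : ((m₁ : ℤ) + 1) = ((m₁ + 1 : ℕ) : ℤ) := by push_cast; rfl
    rw [e1, e2, e3, eulerian_nat _ _ _ (by omega) (by omega)]
    have hfirst : ∀ σ : Perm (Fin (M + 1)), permWord (M + 1) σ 0 = m₁ + 1 ↔ cfun h σ l = J := by
      intro σ
      have a1 : permWord (M + 1) σ 0 = (σ 0 : ℕ) + 1 := by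
        unfold permWord
        rw [dif_pos (by omega)]; rfl
      have a2 : cfun h σ l = emb (σ 0) := by
        have := cfun_castSucc h σ (Fin.succ 0)
        rw [wfun_ss, Fin.castSucc_succ, Fin.castSucc_zero, wfun_one] at this
        exact this
      rw [a1, a2]
      have : J ∈ Set.range emb := by rw [hB]; exact hJ
      obtain ⟨i, rfl⟩ := this
      rw [rank_emb emb B hB] at hm
      rw [emb.injective.eq_iff, Fin.ext_iff, hm]
      omega
    symm
    apply Finset.card_bij (fun σ _ => cfun h σ)
    · intro σ hσ
      rw [Finset.mem_filter] at hσ ⊢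
      refine ⟨cfun_mem_cyc h B hB σ, ?_, ?_, (hfirst σ).1 hσ.2.2⟩
      · rw [cfun_cdes]; omega
      · have := cfun_castSucc h σ 0
        rw [Fin.castSucc_zero, wfun_zero, wfun_one] at this
        exact this
    · intro σ _ τ _ hst
      exact cfun_inj h hst
    · intro c hc
      rw [Finset.mem_filter] at hc
      obtain ⟨hc1, hc2, hc3, hc4⟩ := hc
      obtain ⟨σ, rfl⟩ := cfun_surj h B hB c hc1 hc3
      refine ⟨σ, ?_, rfl⟩
      rw [Finset.mem_filter]
      refine ⟨Finset.mem_univ _, ?_, (hfirst σ).2 hc4⟩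
      rw [cfun_cdes] at hc2
      omega

lemma card_U {n M m₁ : ℕ} (z l J : Fin n) (B : Finset (Fin n)) (hBc : B.card = M + 1)
    (hBb : ∀ x ∈ B, z < x ∧ x < l) (hJ : J ∈ B) (hm : (B.filter (fun x => x < J)).card = m₁)
    (hM : Even M) (e : ℕ) :
    ((cyc (insert z (insert l B))).filter
      (fun c => min (cdes c) (casc c) = e ∧ c z = l ∧ c l = J)).card =
      if e ≤ (M + 2) / 2 then Ucount ((M : ℤ) + 1) ((e : ℤ) - 1) ((m₁ : ℤ) + 1) else 0 := by
  have hzl : z < l := (hBb J hJ).1.trans (hBb J hJ).2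
  have hlB : l ∉ B := fun hx => (hBb l hx).2.false
  have hzB : z ∉ insert l B := by
    rw [Finset.mem_insert, not_or]
    exact ⟨hzl.ne, fun hx => (hBb z hx).1.false⟩
  have hTc : (insert z (insert l B)).card = M + 3 := by
    rw [Finset.card_insert_of_notMem hzB, Finset.card_insert_of_notMem hlB, hBc]
  have hsum : ∀ c ∈ cyc (insert z (insert l B)), cdes c + casc c = M + 3 := by
    intro c hc
    rw [cdes_add_casc]
    rcases cyc_cases hc (Finset.mem_insert_self z _) with ⟨h1, h2⟩ | ⟨h1, h2⟩
    · rw [h1] at hTc; simp at hTc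
    · rw [h2, hTc]
  obtain ⟨q, hq⟩ := hM
  split_ifs with he
  · unfold Ucount
    have a1 : ((M : ℤ) + 1 - (e - 1) - 1) = ((M + 3 - e : ℕ) : ℤ) - 2 := by omega
    have a2 : ((e : ℤ) - 1 - 1) = (e : ℤ) - 2 := by omega
    rw [a1, a2, ← card_cdes z l J B hBc hBb hJ hm, ← card_cdes z l J B hBc hBb hJ hm,
      ← Finset.card_union_of_disjoint]
    · congr 1
      ext c
      rw [Finset.mem_union, Finset.mem_filter, Finset.mem_filter, Finset.mem_filter]
      by_cases hc : c ∈ cyc (insert z (insert l B))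
      · have := hsum c hc
        have hiff : min (cdes c) (casc c) = e ↔ (cdes c = M + 3 - e ∨ cdes c = e) := by omega
        rw [hiff]; tauto
      · tauto
    · rw [Finset.disjoint_left]
      intro c hc hc'
      rw [Finset.mem_filter] at hc hc'
      omega
  · rw [Finset.card_eq_zero, Finset.eq_empty_iff_forall_notMem]
    intro c hc
    rw [Finset.mem_filter] at hc
    have := hsum c hc.1
    omega

end OOC

namespace OOC

open Equiv Equiv.Perm

lemma count_eq (n d j : ℕ) (z l J : Fin n) (hz : (z : ℕ) = 0) (hl : (l : ℕ) + 1 = n)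
    (hJ : (J : ℕ) + 1 = j) (R : Perm (Fin n) → Prop) (hR : ∀ c, R c ↔ (c z = l ∧ c l = J)) :
    oddOrderCyclicCount n d 1 j = ((oddOn Finset.univ d).filter
      (fun π => R (π.cycleOf z))).card := by
  unfold oddOrderCyclicCount
  rw [Nat.card_eq_fintype_card, Fintype.card_subtype, oddOn, Finset.filter_filter]
  congr 1
  ext π
  simp only [Finset.mem_filter, Finset.mem_univ, true_and, Finset.subset_univ]
  have h1 : HasCyclicFactor n π 1 n j ↔ (π z = l ∧ π l = J) := by
    constructor
    · rintro ⟨x, y, w, hx, hy, hw, h1, h2⟩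
      have ex : x = z := Fin.ext (by omega)
      have ey : y = l := Fin.ext (by omega)
      have ew : w = J := Fin.ext (by omega)
      subst ex ey ew
      exact ⟨h1, h2⟩
    · rintro ⟨h1, h2⟩
      exact ⟨z, l, J, by omega, by omega, by omega, h1, h2⟩
  have h2 : (π z = l ∧ π l = J) ↔ ((π.cycleOf z) z = l ∧ (π.cycleOf z) l = J) := by
    rw [cycleOf_apply_self]
    constructor
    · rintro ⟨a, b⟩
      refine ⟨a, ?_⟩
      rw [SameCycle.cycleOf_apply ⟨1, by simpa using a⟩, b]
    · rintro ⟨a, b⟩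
      refine ⟨a, ?_⟩
      rw [SameCycle.cycleOf_apply ⟨1, by simpa using a⟩] at b
      exact b
  rw [h1, h2, hR]
  tauto

lemma sum_pairs {n : ℕ} (X Y : Finset (Fin n)) (g : ℕ → ℕ → ℚ) :
    ∑ P ∈ X.powerset ×ˢ Y.powerset, g P.1.card P.2.card =
      ∑ a ∈ Finset.range (X.card + 1), ∑ b ∈ Finset.range (Y.card + 1),
        (X.card.choose a : ℚ) * (Y.card.choose b : ℚ) * g a b := by
  rw [Finset.sum_product]
  have e : ∀ A ∈ X.powerset, ∑ B ∈ Y.powerset, g A.card B.card =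
      (fun a => ∑ b ∈ Finset.range (Y.card + 1), (Y.card.choose b : ℚ) * g a b) A.card := by
    intro A _
    have := Finset.sum_powerset_apply_card (fun k => g A.card k) (x := Y)
    simpa only [nsmul_eq_mul] using this
  rw [Finset.sum_congr rfl e]
  have := Finset.sum_powerset_apply_card
    (fun a => ∑ b ∈ Finset.range (Y.card + 1), (Y.card.choose b : ℚ) * g a b) (x := X)
  rw [this]
  apply Finset.sum_congr rfl
  intro a _
  rw [nsmul_eq_mul, Finset.mul_sum]
  apply Finset.sum_congr rfl
  intro b _
  ring

/-- inner sum -/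
noncomputable def GG (n d m₁ m₂ : ℕ) : ℚ :=
  if Even (m₁ + m₂) then ∑ e ∈ Finset.range (d + 1),
    (if e ≤ (m₁ + m₂ + 2) / 2 then
      (Ucount ((m₁ : ℤ) + m₂ + 1) ((e : ℤ) - 1) ((m₁ : ℤ) + 1) : ℚ) else 0) *
      (((n - 3 - m₁ - m₂).factorial : ℚ) * ff (n - 3 - m₁ - m₂) (d - e)) else 0

lemma lhs_eq (n d j : ℕ) (hn : 3 ≤ n) (hj1 : 2 ≤ j) (hj2 : j ≤ n - 1) :
    (oddOrderCyclicCount n d 1 j : ℚ) = ∑ m₁ ∈ Finset.range (j - 2 + 1),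
      ∑ m₂ ∈ Finset.range (n - j - 1 + 1),
        ((j - 2).choose m₁ : ℚ) * ((n - j - 1).choose m₂ : ℚ) * GG n d m₁ m₂ := by
  obtain ⟨z, hz⟩ : ∃ z : Fin n, (z : ℕ) = 0 := ⟨⟨0, by omega⟩, rfl⟩
  obtain ⟨l, hl⟩ : ∃ l : Fin n, (l : ℕ) = n - 1 := ⟨⟨n - 1, by omega⟩, rfl⟩
  obtain ⟨J, hJ⟩ : ∃ J : Fin n, (J : ℕ) = j - 1 := ⟨⟨j - 1, by omega⟩, rfl⟩
  have hzJ : z < J := by rw [Fin.lt_def]; omega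
  have hJl : J < l := by rw [Fin.lt_def]; omega
  have cX : (Finset.Ioo z J).card = j - 2 := by rw [Fin.card_Ioo]; omega
  have cY : (Finset.Ioo J l).card = n - j - 1 := by rw [Fin.card_Ioo]; omega
  have hsp := sum_pairs (Finset.Ioo z J) (Finset.Ioo J l) (GG n d)
  rw [cX, cY] at hsp
  obtain ⟨R, hR⟩ : ∃ R : Perm (Fin n) → Prop, ∀ c, R c ↔ (c z = l ∧ c l = J) :=
    ⟨fun c => c z = l ∧ c l = J, fun _ => Iff.rfl⟩
  rw [← hsp, count_eq n d j z l J hz (by omega) (by omega) R hR,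
    decomp Finset.univ d z (Finset.mem_univ z)]
  push_cast
  symm
  -- restrict to relevant sets
  have hres : ∀ T ∈ (Finset.univ : Finset (Fin n)).powerset.filter (fun T => z ∈ T),
      (if Odd T.card then ∑ e ∈ Finset.range (d + 1),
        (((cyc T).filter (fun c => min (cdes c) (casc c) = e ∧ R c)).card : ℚ) *
          ((oddOn (Finset.univ \ T) (d - e)).card : ℚ) else 0) ≠ 0 → l ∈ T ∧ J ∈ T := by
    intro T hT hne
    by_contra hcon
    apply hne
    rw [Finset.mem_filter] at hT
    split_ifs with ho
    · apply Finset.sum_eq_zero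
      intro e _
      have : ((cyc T).filter (fun c => min (cdes c) (casc c) = e ∧ R c)) = ∅ := by
        rw [Finset.eq_empty_iff_forall_notMem]
        intro c hc
        simp only [cyc, Finset.mem_filter, Finset.mem_univ, true_and, hR] at hc
        apply hcon
        have h1 : l ∈ T := by
          have := hc.1.1.1.mapsTo (Finset.mem_coe.2 hT.2)
          rw [hc.2.2.1] at this
          exact this
        refine ⟨h1, ?_⟩
        have := hc.1.1.1.mapsTo (Finset.mem_coe.2 h1)
        rw [hc.2.2.2] at this
        exact this
      rw [this]; simp
    · rfl
  rw [← Finset.sum_filter_of_ne hres]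
  refine Finset.sum_bij' (fun P _ => insert z (insert l (insert J (P.1 ∪ P.2))))
    (fun T _ => (T ∩ Finset.Ioo z J, T ∩ Finset.Ioo J l)) ?_ ?_ ?_ ?_ ?_
  · intro P hP
    simp
  · intro T hT
    simp [Finset.mem_product, Finset.mem_powerset, Finset.inter_subset_right]
  · rintro ⟨A, B⟩ hP
    simp only [Finset.mem_product, Finset.mem_powerset] at hP
    obtain ⟨hA, hB⟩ := hP
    have hA' : ∀ x ∈ A, z < x ∧ x < J := fun x hx => Finset.mem_Ioo.1 (hA hx)
    have hB' : ∀ x ∈ B, J < x ∧ x < l := fun x hx => Finset.mem_Ioo.1 (hB hx)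
    ext x
    · simp only [Finset.mem_inter, Finset.mem_insert, Finset.mem_union, Finset.mem_Ioo]
      have := hA' x
      have := hB' x
      constructor
      · rintro ⟨rfl | rfl | rfl | h | h, h1, h2⟩
        · exact absurd h1 (lt_irrefl _)
        · exact absurd h2 hJl.asymm
        · exact absurd h2 (lt_irrefl _)
        · exact h
        · exact absurd h2 (hB' x h).1.asymm
      · intro h
        exact ⟨by tauto, hA' x h⟩
    · simp only [Finset.mem_inter, Finset.mem_insert, Finset.mem_union, Finset.mem_Ioo]
      constructor
      · rintro ⟨rfl | rfl | rfl | h | h, h1, h2⟩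
        · exact absurd h1 hzJ.asymm
        · exact absurd h2 (lt_irrefl _)
        · exact absurd h1 (lt_irrefl _)
        · exact absurd h1 (hA' x h).2.asymm
        · exact h
      · intro h
        exact ⟨by tauto, hB' x h⟩
  · intro T hT
    simp only [Finset.mem_filter] at hT
    obtain ⟨⟨_, h1⟩, h2, h3⟩ := hT
    ext x
    simp only [Finset.mem_inter, Finset.mem_insert, Finset.mem_union, Finset.mem_Ioo]
    constructor
    · rintro (rfl | rfl | rfl | h | h)
      · exact h1
      · exact h2
      · exact h3
      · exact h.1
      · exact h.1
    · intro h
      have hx := x.2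
      simp only [h, true_and, Fin.lt_def, Fin.ext_iff]
      omega
  · rintro ⟨A, B⟩ hP
    simp only [Finset.mem_product, Finset.mem_powerset] at hP
    obtain ⟨hA, hB⟩ := hP
    have hA' : ∀ x ∈ A, z < x ∧ x < J := fun x hx => Finset.mem_Ioo.1 (hA hx)
    have hB' : ∀ x ∈ B, J < x ∧ x < l := fun x hx => Finset.mem_Ioo.1 (hB hx)
    simp only
    have hdAB : Disjoint A B := by
      rw [Finset.disjoint_left]
      intro x hx hx'
      exact (hA' x hx).2.asymm (hB' x hx').1
    obtain ⟨C, hC⟩ : ∃ C, C = insert J (A ∪ B) := ⟨_, rfl⟩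
    have hJn : J ∉ A ∪ B := by
      rw [Finset.mem_union]
      rintro (h | h)
      · exact (hA' J h).2.false
      · exact (hB' J h).1.false
    have hCc : C.card = A.card + B.card + 1 := by
      rw [hC, Finset.card_insert_of_notMem hJn, Finset.card_union_of_disjoint hdAB]
    have hCb : ∀ x ∈ C, z < x ∧ x < l := by
      intro x hx
      rw [hC, Finset.mem_insert, Finset.mem_union] at hx
      rcases hx with rfl | h | h
      · exact ⟨hzJ, hJl⟩
      · exact ⟨(hA' x h).1, (hA' x h).2.trans hJl⟩
      · exact ⟨hzJ.trans (hB' x h).1, (hB' x h).2⟩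
    have hm : (C.filter (fun x => x < J)).card = A.card := by
      congr 1
      ext x
      rw [Finset.mem_filter, hC, Finset.mem_insert, Finset.mem_union]
      constructor
      · rintro ⟨rfl | h | h, h2⟩
        · exact absurd h2 (lt_irrefl _)
        · exact h
        · exact absurd h2 (hB' x h).1.asymm
      · intro h
        exact ⟨Or.inr (Or.inl h), (hA' x h).2⟩
    have hJC : J ∈ C := by rw [hC]; simp
    have hlC : l ∉ C := fun hx => (hCb l hx).2.false
    have hzC : z ∉ insert l C := by
      rw [Finset.mem_insert, not_or]
      exact ⟨(hzJ.trans hJl).ne, fun hx => (hCb z hx).1.false⟩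
    have hTc : (insert z (insert l C)).card = A.card + B.card + 3 := by
      rw [Finset.card_insert_of_notMem hzC, Finset.card_insert_of_notMem hlC, hCc]
    rw [← hC, hTc]
    unfold GG
    have hpar : Odd (A.card + B.card + 3) ↔ Even (A.card + B.card) := by
      rw [Nat.odd_add]; simp [Nat.even_iff, Nat.odd_iff]
    by_cases hev : Even (A.card + B.card)
    · rw [if_pos hev, if_pos (hpar.2 hev)]
      apply Finset.sum_congr rfl
      intro e _
      have hcd : (Finset.univ \ (insert z (insert l C))).card = n - 3 - A.card - B.card := by
        rw [Finset.card_sdiff_of_subset (Finset.subset_univ _), hTc, Finset.card_univ,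
          Fintype.card_fin]
        omega
      have hU := card_U z l J C hCc hCb hJC hm hev e
      simp only [← hR] at hU
      rw [card_oddOn _ _ _ hcd, hU]
      push_cast
      rfl
    · rw [if_neg hev, if_neg (fun h => hev (hpar.1 h))]

lemma tw_eq (lam : ℕ × ℕ →₀ ℕ) (K : ℚ) :
    K / (∏ p ∈ lam.support, ((p.1.factorial : ℚ) ^ lam p * ((lam p).factorial : ℚ))) *
      (∏ p ∈ lam.support, (cycleMinCount p.1 p.2 : ℚ) ^ lam p) = K * tw lam := by
  unfold tw Finsupp.prod
  rw [div_mul_eq_mul_div, mul_div_assoc, ← Finset.prod_div_distrib]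
  congr 1
  apply Finset.prod_congr rfl
  intro p _
  simp only
  rw [div_pow, div_div]

lemma inner_eq (n d j m₁ m₂ d₀ : ℕ) :
    (∑ᶠ (lam : ℕ × ℕ →₀ ℕ),
        if (∀ p ∈ lam.support, Odd p.1) ∧ Even (m₁ + m₂) ∧ d₀ ≤ (m₁ + m₂ + 2) / 2 ∧
            m₁ + m₂ + 3 + (∑ p ∈ lam.support, p.1 * lam p) = n ∧
            d₀ + (∑ p ∈ lam.support, p.2 * lam p) = d then
          ((j - 2).choose m₁ : ℚ) * ((n - j - 1).choose m₂ : ℚ) *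
            (((n - 3 - m₁ - m₂).factorial : ℚ) /
              ∏ p ∈ lam.support, ((p.1.factorial : ℚ) ^ lam p * ((lam p).factorial : ℚ))) *
            (∏ p ∈ lam.support, (cycleMinCount p.1 p.2 : ℚ) ^ lam p) *
            (Ucount ((m₁ : ℤ) + m₂ + 1) ((d₀ : ℤ) - 1) ((m₁ : ℤ) + 1) : ℚ)
        else 0) =
    if Even (m₁ + m₂) ∧ d₀ ≤ (m₁ + m₂ + 2) / 2 ∧ m₁ + m₂ + 3 ≤ n ∧ d₀ ≤ d then
      ((j - 2).choose m₁ : ℚ) * ((n - j - 1).choose m₂ : ℚ) *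
        ((Ucount ((m₁ : ℤ) + m₂ + 1) ((d₀ : ℤ) - 1) ((m₁ : ℤ) + 1) : ℚ) *
          (((n - 3 - m₁ - m₂).factorial : ℚ) * ff (n - 3 - m₁ - m₂) (d - d₀)))
      else 0 := by
  split_ifs with h
  · obtain ⟨h1, h2, h3, h4⟩ := h
    rw [finsum_eq_sum_of_support_subset (s := lamFin (n - 3 - m₁ - m₂) (d - d₀))]
    · unfold ff
      rw [Finset.mul_sum, Finset.mul_sum, Finset.mul_sum]
      apply Finset.sum_congr rfl
      intro lam hlam
      obtain ⟨b1, b2, b3⟩ := mem_lamFin.1 hlam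
      rw [if_pos ⟨b1, h1, h2, by omega, by omega⟩, mul_assoc (_ * _) (_ / _), tw_eq]
      ring
    · intro lam hlam
      rw [Function.mem_support] at hlam
      rw [Finset.mem_coe, mem_lamFin]
      by_contra hcon
      apply hlam
      rw [if_neg]
      rintro ⟨b1, _, _, b2, b3⟩
      exact hcon ⟨b1, by omega, by omega⟩
  · refine (finsum_congr (g := fun _ => (0 : ℚ)) ?_).trans finsum_zero
    intro lam
    rw [if_neg]
    rintro ⟨b1, b2, b3, b4, b5⟩
    exact h ⟨b2, b3, by omega, by omega⟩

lemma d_eq (n d j m₁ m₂ : ℕ) (h : m₁ + m₂ + 3 ≤ n ∨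
      ((j - 2).choose m₁ : ℚ) * ((n - j - 1).choose m₂ : ℚ) = 0) :
    (∑ᶠ (d₀ : ℕ), if Even (m₁ + m₂) ∧ d₀ ≤ (m₁ + m₂ + 2) / 2 ∧ m₁ + m₂ + 3 ≤ n ∧ d₀ ≤ d then
      ((j - 2).choose m₁ : ℚ) * ((n - j - 1).choose m₂ : ℚ) *
        ((Ucount ((m₁ : ℤ) + m₂ + 1) ((d₀ : ℤ) - 1) ((m₁ : ℤ) + 1) : ℚ) *
          (((n - 3 - m₁ - m₂).factorial : ℚ) * ff (n - 3 - m₁ - m₂) (d - d₀)))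
      else 0) = ((j - 2).choose m₁ : ℚ) * ((n - j - 1).choose m₂ : ℚ) * GG n d m₁ m₂ := by
  rw [finsum_eq_sum_of_support_subset (s := Finset.range (d + 1))]
  · unfold GG
    rcases h with h | h
    · by_cases hev : Even (m₁ + m₂)
      · rw [if_pos hev, Finset.mul_sum]
        apply Finset.sum_congr rfl
        intro e he
        rw [Finset.mem_range] at he
        by_cases hle : e ≤ (m₁ + m₂ + 2) / 2
        · rw [if_pos ⟨hev, hle, h, by omega⟩, if_pos hle]
        · rw [if_neg (fun hh => hle hh.2.1), if_neg hle]; simp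
      · rw [if_neg hev, mul_zero]
        apply Finset.sum_eq_zero
        intro e _
        rw [if_neg (fun hh => hev hh.1)]
    · rw [h, zero_mul]
      apply Finset.sum_eq_zero
      intro e _
      rw [zero_mul, ite_self]
  · intro e he
    rw [Function.mem_support] at he
    rw [Finset.mem_coe, Finset.mem_range]
    by_contra hcon
    apply he
    rw [if_neg]
    rintro ⟨_, _, _, h4⟩
    omega

end OOC

/-- The expansion of `p_{n,d}(1,j)` over cycle-type data: the sum ranges over
`m₁, m₂, d₀ ≥ 0` with `m₁+m₂` even and `d₀ ≤ (m₁+m₂+2)/2`, and over finitely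
supported functions `λ` on pairs `(m,e)` with `m` odd, subject to
`m₁+m₂+3+Σ m·λ(m,e) = n` and `d₀+Σ e·λ(m,e) = d`. -/
theorem oddOrderCyclicCount_eq (n d j : ℕ) (hn : 3 ≤ n) (hj1 : 2 ≤ j) (hj2 : j ≤ n - 1) :
    (oddOrderCyclicCount n d 1 j : ℚ) =
      ∑ᶠ (m₁ : ℕ) (m₂ : ℕ) (d₀ : ℕ) (lam : ℕ × ℕ →₀ ℕ),
        if (∀ p ∈ lam.support, Odd p.1) ∧ Even (m₁ + m₂) ∧ d₀ ≤ (m₁ + m₂ + 2) / 2 ∧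
            m₁ + m₂ + 3 + (∑ p ∈ lam.support, p.1 * lam p) = n ∧
            d₀ + (∑ p ∈ lam.support, p.2 * lam p) = d then
          ((j - 2).choose m₁ : ℚ) * ((n - j - 1).choose m₂ : ℚ) *
            (((n - 3 - m₁ - m₂).factorial : ℚ) /
              ∏ p ∈ lam.support, ((p.1.factorial : ℚ) ^ lam p * ((lam p).factorial : ℚ))) *
            (∏ p ∈ lam.support, (cycleMinCount p.1 p.2 : ℚ) ^ lam p) *
            (Ucount ((m₁ : ℤ) + m₂ + 1) ((d₀ : ℤ) - 1) ((m₁ : ℤ) + 1) : ℚ)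
        else 0 := by
  have hch : ∀ m₁ m₂ : ℕ, m₁ + m₂ + 3 ≤ n ∨
      ((j - 2).choose m₁ : ℚ) * ((n - j - 1).choose m₂ : ℚ) = 0 := by
    intro m₁ m₂
    by_cases h1 : j - 2 < m₁
    · right; rw [Nat.choose_eq_zero_of_lt h1]; simp
    by_cases h2 : n - j - 1 < m₂
    · right; rw [Nat.choose_eq_zero_of_lt h2]; simp
    left; omega
  rw [OOC.lhs_eq n d j hn hj1 hj2]
  simp only [OOC.inner_eq]
  simp only [fun m₁ m₂ => OOC.d_eq n d j m₁ m₂ (hch m₁ m₂)]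
  have hm2 : ∀ m₁ : ℕ, (∑ᶠ (m₂ : ℕ), ((j - 2).choose m₁ : ℚ) * ((n - j - 1).choose m₂ : ℚ) *
      OOC.GG n d m₁ m₂) = ∑ m₂ ∈ Finset.range (n - j - 1 + 1),
        ((j - 2).choose m₁ : ℚ) * ((n - j - 1).choose m₂ : ℚ) * OOC.GG n d m₁ m₂ := by
    intro m₁
    apply finsum_eq_sum_of_support_subset
    intro m₂ hm
    rw [Function.mem_support] at hm
    rw [Finset.mem_coe, Finset.mem_range]
    by_contra hcon
    apply hm
    rw [Nat.choose_eq_zero_of_lt (show n - j - 1 < m₂ by omega)]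
    simp
  simp only [hm2]
  symm
  apply finsum_eq_sum_of_support_subset
  intro m₁ hm
  rw [Function.mem_support] at hm
  rw [Finset.mem_coe, Finset.mem_range]
  by_contra hcon
  apply hm
  apply Finset.sum_eq_zero
  intro m₂ _
  rw [Nat.choose_eq_zero_of_lt (show j - 2 < m₁ by omega)]
  simp
end

section
/- For every odd integer n ≥ 3, every integer j with 2 ≤ j ≤ n−1, and every integer d with 0 ≤ d ≤ (n−1)/2, the number of cyclic permutations of [n] (single n-cycles) c with min(cdes(c), casc(c)) = d having '1 n j' as a cyclic factor equals A(n−2, d−2, j−1) + A(n−2, n−d−2, j−1). -/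
/-- The word `1 n (π₁+1) ⋯ (π_{n-2}+1)` as a function. -/
def sigFun (k : ℕ) (π : Equiv.Perm (Fin (k+1))) : Fin (k+3) → Fin (k+3) :=
  Fin.cons 0 (Fin.cons (Fin.last _) (fun i : Fin (k+1) => (π i).castSucc.succ))

lemma sigFun_zero (k : ℕ) (π : Equiv.Perm (Fin (k+1))) : sigFun k π 0 = 0 := rfl
lemma sigFun_one (k : ℕ) (π : Equiv.Perm (Fin (k+1))) : sigFun k π 1 = Fin.last _ := rfl
lemma sigFun_ss (k : ℕ) (π : Equiv.Perm (Fin (k+1))) (i : Fin (k+1)) :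
    sigFun k π i.succ.succ = (π i).castSucc.succ := rfl

lemma sigFun_inj (k : ℕ) (π : Equiv.Perm (Fin (k+1))) : Function.Injective (sigFun k π) := by
  unfold sigFun
  rw [Fin.cons_injective_iff, Fin.cons_injective_iff]
  refine ⟨?_, ?_, ?_⟩
  · rintro ⟨x, hx⟩
    cases x using Fin.cases with
    | zero => have := congrArg Fin.val hx; simp at this
    | succ i => have := congrArg Fin.val hx; simp at this
  · rintro ⟨x, hx⟩
    have := (π x).2
    have h2 := congrArg Fin.val hx
    simp at h2
    omega
  · intro x y h
    apply π.injective
    apply Fin.ext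
    have h2 := congrArg Fin.val h
    simpa using h2

noncomputable def sig (k : ℕ) (π : Equiv.Perm (Fin (k+1))) : Equiv.Perm (Fin (k+3)) :=
  Equiv.ofBijective (sigFun k π) (Finite.injective_iff_bijective.1 (sigFun_inj k π))

lemma sig_apply (k : ℕ) (π : Equiv.Perm (Fin (k+1))) (i) : sig k π i = sigFun k π i := rfl

noncomputable def cyc (k : ℕ) (π : Equiv.Perm (Fin (k+1))) : Equiv.Perm (Fin (k+3)) :=
  sig k π * finRotate (k+3) * (sig k π)⁻¹

lemma cyc_sig (k : ℕ) (π : Equiv.Perm (Fin (k+1))) (i : Fin (k+3)) :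
    cyc k π (sig k π i) = sig k π (i + 1) := by
  simp [cyc]

lemma cyc_isCycleOn (k : ℕ) (π : Equiv.Perm (Fin (k+1))) :
    (cyc k π).IsCycleOn (Set.univ : Set (Fin (k+3))) := by
  have h := (isCycle_finRotate (n := k+1)).isCycleOn
  have h1 : {x | finRotate (k+1+2) x ≠ x} = (Set.univ : Set (Fin (k+3))) := by
    ext x
    have := support_finRotate (n := k+1)
    have hx : x ∈ (finRotate (k+1+2)).support := by rw [this]; simp
    simpa using hx
  rw [h1] at h
  have h2 := h.conj (g := sig k π)
  rw [Set.image_univ, (sig k π).range_eq_univ] at h2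
  exact h2

lemma cyc_zero (k : ℕ) (π : Equiv.Perm (Fin (k+1))) : cyc k π 0 = Fin.last _ := by
  have := cyc_sig k π 0
  rwa [zero_add, sig_apply, sig_apply, sigFun_zero, sigFun_one] at this

lemma cyc_last (k : ℕ) (π : Equiv.Perm (Fin (k+1))) :
    cyc k π (Fin.last _) = (π 0).castSucc.succ := by
  have := cyc_sig k π 1
  rw [sig_apply, sig_apply, sigFun_one] at this
  exact this

lemma sig_pow (k : ℕ) (π : Equiv.Perm (Fin (k+1))) (i : ℕ) (hi : i < k + 3) :
    ((cyc k π)^i) 0 = sig k π ⟨i, hi⟩ := by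
  induction i with
  | zero => rfl
  | succ i ih => 
    rw [pow_succ', Equiv.Perm.mul_apply, ih (by omega), cyc_sig]
    congr 1
    apply Fin.ext
    rw [Fin.val_add_one_of_lt']
    exact hi

lemma cyc_inj (k : ℕ) : Function.Injective (cyc k) := by
  intro π ρ h
  have h1 : ∀ i, sig k π i = sig k ρ i := by
    intro i
    have h2 := sig_pow k π i.1 i.2
    have h3 := sig_pow k ρ i.1 i.2
    rw [h, h3] at h2
    exact h2.symm
  ext i
  have := h1 i.succ.succ
  rw [sig_apply, sig_apply, sigFun_ss, sigFun_ss] at this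
  simpa [Fin.ext_iff] using this

lemma cyc_surj (k : ℕ) (c : Equiv.Perm (Fin (k+3))) (hc : c.IsCycleOn (Set.univ : Set (Fin (k+3))))
    (h0 : c 0 = Fin.last _) : ∃ π, cyc k π = c := by
  have hc' : c.IsCycleOn ((Finset.univ : Finset (Fin (k+3))) : Set (Fin (k+3))) := by simpa using hc
  let f : Fin (k+3) → Fin (k+3) := fun i => (c ^ i.1) 0
  have hsurj : Function.Surjective f := by
    intro y
    obtain ⟨n, hn, h⟩ := hc'.exists_pow_eq (Finset.mem_univ 0) (Finset.mem_univ y)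
    exact ⟨⟨n, by simpa using hn⟩, h⟩
  have hinj : Function.Injective f := Finite.injective_iff_surjective.2 hsurj
  have hf0 : f 0 = 0 := by simp [f]
  have hf1 : f 1 = Fin.last _ := by simp [f, h0]
  have hne0 : ∀ i : Fin (k+1), (f i.succ.succ).1 ≠ 0 := by
    intro i h
    have : f i.succ.succ = f 0 := by rw [hf0]; exact Fin.ext h
    have := congrArg Fin.val (hinj this)
    simp at this
  have hnel : ∀ i : Fin (k+1), (f i.succ.succ).1 ≠ k+2 := by
    intro i h
    have : f i.succ.succ = f 1 := by rw [hf1]; exact Fin.ext h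
    have := congrArg Fin.val (hinj this)
    simp at this
  let g : Fin (k+1) → Fin (k+1) := fun i => ⟨(f i.succ.succ).1 - 1, by
    have := hne0 i; have := hnel i; have := (f i.succ.succ).2; omega⟩
  have ginj : Function.Injective g := by
    intro x y h
    have h1 := hne0 x
    have h2 := hne0 y
    have h3 : (f x.succ.succ).1 - 1 = (f y.succ.succ).1 - 1 := congrArg Fin.val h
    have h4 : f x.succ.succ = f y.succ.succ := Fin.ext (by omega)
    simpa using hinj h4
  refine ⟨Equiv.ofBijective g (Finite.injective_iff_bijective.1 ginj), ?_⟩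
  set π := Equiv.ofBijective g (Finite.injective_iff_bijective.1 ginj) with hπ
  have hsig : ∀ i, sig k π i = f i := by
    intro i
    rw [sig_apply]
    cases i using Fin.cases with
    | zero => rw [sigFun_zero, hf0]
    | succ i =>
      cases i using Fin.cases with
      | zero => rw [show (Fin.succ 0 : Fin (k+3)) = 1 from rfl, sigFun_one, hf1]
      | succ i =>
        rw [sigFun_ss]
        apply Fin.ext
        have := hne0 i
        show (f i.succ.succ).1 - 1 + 1 = _
        omega
  ext x
  obtain ⟨i, rfl⟩ := hsurj x
  rw [← hsig i, cyc_sig, hsig, hsig]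
  congr 1
  show (c ^ (i+1).1) 0 = c ((c ^ i.1) 0)
  rw [← Equiv.Perm.mul_apply, ← pow_succ']
  rw [Fin.val_add_one]
  split_ifs with h
  · rw [h]
    have := hc'.pow_card_apply (Finset.mem_univ 0)
    simp only [Finset.card_univ, Fintype.card_fin] at this
    simpa using this.symm
  · rfl

lemma cdes_cyc (k : ℕ) (π : Equiv.Perm (Fin (k+1))) :
    cdes (cyc k π) = desNum (k+1) π + 2 := by
  unfold cdes desNum
  rw [Finset.card_filter, Finset.card_filter, ← Equiv.sum_comp (sig k π)]
  simp only [cyc_sig]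
  rw [Fin.sum_univ_succ, Fin.sum_univ_succ, Fin.sum_univ_castSucc, Nat.add_sub_cancel,
    Finset.sum_range]
  have e0 : (if sig k π (0+1) < sig k π 0 then 1 else 0) = 0 := by
    rw [sig_apply, sig_apply, sigFun_zero]; simp
  have e1 : (if sig k π (Fin.succ 0 + 1) < sig k π (Fin.succ 0) then 1 else 0) = 1 := by
    rw [sig_apply, sig_apply, show (Fin.succ 0 : Fin (k+3)) = 1 from rfl, sigFun_one,
      show (1 + 1 : Fin (k+3)) = (0 : Fin (k+1)).succ.succ from rfl, sigFun_ss]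
    rw [if_pos]
    rw [Fin.lt_def]
    have := (π 0).2
    simp
    omega
  have e2 : (if sig k π ((Fin.last k).succ.succ + 1) < sig k π ((Fin.last k).succ.succ)
      then 1 else 0) = 1 := by
    rw [sig_apply, sig_apply, sigFun_ss, Fin.succ_last, Fin.succ_last, Fin.last_add_one,
      sigFun_zero, if_pos]
    rw [Fin.lt_def]
    simp
  rw [e0, e1, e2]
  have e3 : ∀ i : Fin k, (if sig k π (i.castSucc.succ.succ + 1) < sig k π i.castSucc.succ.succ
      then 1 else 0) = if permWord (k+1) π (i.1+1) < permWord (k+1) π i.1 then 1 else 0 := by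
    intro i
    have h1 : (i.castSucc.succ.succ + 1 : Fin (k+3)) = i.succ.succ.succ := by
      rw [Fin.succ_castSucc, Fin.succ_castSucc, Fin.coeSucc_eq_succ]
    rw [h1, sig_apply, sig_apply, sigFun_ss, sigFun_ss]
    have h2 : permWord (k+1) π (i.1+1) = (π i.succ).1 + 1 := by
      unfold permWord; rw [dif_pos (by omega)]; rfl
    have h3 : permWord (k+1) π i.1 = (π i.castSucc).1 + 1 := by
      unfold permWord; rw [dif_pos (by omega)]; rfl
    rw [h2, h3]
    simp
  rw [Finset.sum_congr rfl (fun i _ => e3 i)]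
  ring

lemma cdes_add_casc (k : ℕ) (π : Equiv.Perm (Fin (k+1))) :
    cdes (cyc k π) + casc (cyc k π) = k + 3 := by
  unfold cdes casc
  have h : ∀ x, cyc k π x ≠ x := by
    intro x
    obtain ⟨i, rfl⟩ := (sig k π).surjective x
    rw [cyc_sig]
    intro h
    have := (sig k π).injective h
    simp at this
  have : (Finset.univ.filter (fun x => x < cyc k π x)) =
      Finset.univ.filter (fun x => ¬ cyc k π x < x) := by
    ext x
    have := h x
    simp only [Finset.mem_filter, Finset.mem_univ, true_and, not_lt]
    exact ⟨le_of_lt, fun h' => lt_of_le_of_ne h' this.symm⟩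
  rw [this, Finset.card_filter_add_card_filter_not]
  simp

lemma permWord_zero (k : ℕ) (π : Equiv.Perm (Fin (k+1))) : permWord (k+1) π 0 = (π 0).1 + 1 := by
  unfold permWord; rw [dif_pos (by omega)]; rfl

lemma factor_cyc (k j : ℕ) (π : Equiv.Perm (Fin (k+1))) :
    HasCyclicFactor (k+3) (cyc k π) 1 (k+3) (j+1) ↔ permWord (k+1) π 0 = j := by
  rw [permWord_zero]
  constructor
  · rintro ⟨x, y, z, hx, hy, hz, h1, h2⟩
    have hy' : y = Fin.last _ := Fin.ext (by simp; omega)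
    rw [hy', cyc_last] at h2
    have := congrArg Fin.val h2
    simp at this
    omega
  · intro h
    exact ⟨0, Fin.last _, (π 0).castSucc.succ, by simp, by simp, by simpa using h, cyc_zero k π,
      cyc_last k π⟩

lemma factor_zero (k j : ℕ) (c : Equiv.Perm (Fin (k+3))) (h : HasCyclicFactor (k+3) c 1 (k+3) j) :
    c 0 = Fin.last _ := by
  obtain ⟨x, y, z, hx, hy, hz, h1, h2⟩ := h
  have hx' : x = 0 := Fin.ext (by rw [Fin.val_zero]; omega)
  have hy' : y = Fin.last _ := Fin.ext (by simp; omega)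
  rw [← hx', h1, hy']

lemma desNum_le (k : ℕ) (π : Equiv.Perm (Fin (k+1))) : desNum (k+1) π ≤ k := by
  unfold desNum
  refine (Finset.card_filter_le _ _).trans (by simp)

lemma card_reduce (k d j : ℕ) :
    Nat.card {c : Equiv.Perm (Fin (k+3)) //
        c.IsCycleOn (Set.univ : Set (Fin (k+3))) ∧ min (cdes c) (casc c) = d ∧
          HasCyclicFactor (k+3) c 1 (k+3) (j+1)} =
    Nat.card {π : Equiv.Perm (Fin (k+1)) //
      min (desNum (k+1) π + 2) (k + 1 - desNum (k+1) π) = d ∧ permWord (k+1) π 0 = j} := by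
  symm
  have key : ∀ π : Equiv.Perm (Fin (k+1)), casc (cyc k π) = k + 1 - desNum (k+1) π := by
    intro π
    have := cdes_add_casc k π
    have := cdes_cyc k π
    omega
  refine Nat.card_congr (Equiv.ofBijective (fun π => ⟨cyc k π.1, cyc_isCycleOn k _, ?_, ?_⟩) ⟨?_, ?_⟩)
  · rw [key, cdes_cyc]; exact π.2.1
  · rw [factor_cyc]; exact π.2.2
  · intro π ρ h
    exact Subtype.ext (cyc_inj k (congrArg Subtype.val h))
  · rintro ⟨c, hc, hm, hf⟩
    obtain ⟨π, rfl⟩ := cyc_surj k c hc (factor_zero k _ c hf)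
    refine ⟨⟨π, ?_, ?_⟩, rfl⟩
    · rw [key, cdes_cyc] at hm; exact hm
    · rwa [factor_cyc] at hf

/-- For odd `n ≥ 3`, `2 ≤ j ≤ n-1` and `0 ≤ d ≤ (n-1)/2`, the number of cyclic
permutations of `[n]` (single `n`-cycles) `c` with `min(cdes c, casc c) = d` having
`1 n j` as a cyclic factor equals `A(n-2, d-2, j-1) + A(n-2, n-d-2, j-1)`. -/
theorem cycle_count_cyclicFactor_eq (n d j : ℕ) (hodd : Odd n) (hn : 3 ≤ n)
    (hj1 : 2 ≤ j) (hj2 : j ≤ n - 1) (hd : d ≤ (n - 1) / 2) :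
    Nat.card {c : Equiv.Perm (Fin n) //
        c.IsCycleOn (Set.univ : Set (Fin n)) ∧ min (cdes c) (casc c) = d ∧
          HasCyclicFactor n c 1 n j} =
      eulerianFirst ((n : ℤ) - 2) ((d : ℤ) - 2) ((j : ℤ) - 1) +
        eulerianFirst ((n : ℤ) - 2) ((n : ℤ) - d - 2) ((j : ℤ) - 1) := by
  obtain ⟨k, rfl⟩ : ∃ k, n = k + 3 := ⟨n - 3, by omega⟩
  obtain ⟨i, rfl⟩ : ∃ i, j = i + 1 := ⟨j - 1, by omega⟩
  rw [card_reduce]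
  have E : ∀ e : ℤ, eulerianFirst (((k + 3 : ℕ) : ℤ) - 2) e (((i + 1 : ℕ) : ℤ) - 1) =
      ((Finset.univ : Finset (Equiv.Perm (Fin (k+1)))).filter
        (fun π => (desNum (k+1) π : ℤ) = e ∧ permWord (k+1) π 0 = i)).card := by
    intro e
    have h1 : (((k + 3 : ℕ) : ℤ) - 2) = ((k + 1 : ℕ) : ℤ) := by push_cast; ring
    have h2 : (((i + 1 : ℕ) : ℤ) - 1) = (i : ℤ) := by push_cast; ring
    rw [h1, h2]
    unfold eulerianFirst
    split_ifs with h
    · rw [Nat.card_eq_fintype_card, Fintype.card_subtype]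
      simp only [Int.toNat_natCast]
      congr 1
      apply Finset.filter_congr
      intro π _
      apply and_congr_left'
      omega
    · symm
      rw [Finset.card_eq_zero, Finset.filter_eq_empty_iff]
      rintro π _ ⟨h3, -⟩
      apply h
      omega
  rw [E, E, Nat.card_eq_fintype_card, Fintype.card_subtype, ← Finset.card_union_of_disjoint]
  · congr 1
    ext π
    have := desNum_le k π
    simp only [Finset.mem_filter, Finset.mem_univ, true_and, Finset.mem_union, ← or_and_right]
    apply and_congr_left'
    omega
  · rw [Finset.disjoint_left]
    intro π h1 h2
    simp only [Finset.mem_filter, Finset.mem_univ, true_and] at h1 h2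
    obtain ⟨r, hr⟩ := hodd
    omega
end
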